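/- Let σ and σ' be polyhedral cones in a finite-dimensional real vector space V (each the set of nonnegative linear combinations of a finite set of vectors). Then σ ∩ σ' is a polyhedral cone, and every face of σ ∩ σ' is of the form τ ∩ τ' for some face τ of σ and some face τ' of σ'. -/

import Mathlib

/-- A subset of a real vector space is a polyhedral cone if it is the set of
nonnegative linear combinations of a finite set of vectors. -/
def IsPolyhedralCone {V : Type*} [AddCommGroup V] [Module ℝ V] (σ : Set V) : Prop :=
  ∃ s : Finset V, σ = {x | ∃ c : V → ℝ, (∀ v ∈ s, 0 ≤ c v) ∧ x = ∑ v ∈ s, c v • v}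

/-- `τ` is a face of `σ` if it is cut out of `σ` by a linear functional which is
nonnegative on `σ`. -/
def IsFaceOf {V : Type*} [AddCommGroup V] [Module ℝ V] (τ σ : Set V) : Prop :=
  ∃ ℓ : V →ₗ[ℝ] ℝ, (∀ x ∈ σ, 0 ≤ ℓ x) ∧ τ = {x ∈ σ | ℓ x = 0}

def gcone {V : Type*} [AddCommGroup V] [Module ℝ V] (s : Finset V) : Set V :=
  {x | ∃ c : V → ℝ, (∀ v ∈ s, 0 ≤ c v) ∧ x = ∑ v ∈ s, c v • v}

def hcone {V : Type*} [AddCommGroup V] [Module ℝ V] (t : Finset (V →ₗ[ℝ] ℝ)) : Set V :=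
  {x | ∀ f ∈ t, 0 ≤ f x}

theorem gcone_insert {V : Type*} [AddCommGroup V] [Module ℝ V] [DecidableEq V] (s : Finset V)
    (v : V) (hv : v ∉ s) (x : V) :
    x ∈ gcone (insert v s) ↔ ∃ a : ℝ, 0 ≤ a ∧ x - a • v ∈ gcone s := by
  constructor
  · rintro ⟨c, hc, rfl⟩
    refine ⟨c v, hc v (by simp), c, fun w hw => hc w (by simp [hw]), ?_⟩
    rw [Finset.sum_insert hv]; abel
  · rintro ⟨a, ha, c, hc, h⟩
    refine ⟨fun w => if w = v then a else c w, ?_, ?_⟩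
    · intro w hw
      by_cases h1 : w = v
      · simp [h1, ha]
      · simp only [h1, if_false]
        exact hc w (by simpa [h1] using hw)
    · rw [Finset.sum_insert hv]
      have : ∑ w ∈ s, (if w = v then a else c w) • w = ∑ w ∈ s, c w • w := by
        refine Finset.sum_congr rfl fun w hw => ?_
        rw [if_neg]
        rintro rfl; exact hv hw
      rw [this, ← h]; simp

theorem gen_mem_gcone {V : Type*} [AddCommGroup V] [Module ℝ V] (s : Finset V)
    (v : V) (hv : v ∈ s) : v ∈ gcone s := by
  classical
  refine ⟨fun w => if w = v then 1 else 0, fun w _ => by dsimp only; split_ifs <;> norm_num, ?_⟩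
  simp [hv]

theorem gcone_nonneg {V : Type*} [AddCommGroup V] [Module ℝ V] (s : Finset V) (f : V →ₗ[ℝ] ℝ)
    (hf : ∀ v ∈ s, 0 ≤ f v) (x : V) (hx : x ∈ gcone s) : 0 ≤ f x := by
  obtain ⟨c, hc, rfl⟩ := hx
  rw [map_sum]
  refine Finset.sum_nonneg fun v hv => ?_
  rw [map_smul, smul_eq_mul]
  exact mul_nonneg (hc v hv) (hf v hv)

theorem exists_hcone {V : Type*} [AddCommGroup V] [Module ℝ V] [FiniteDimensional ℝ V]
    (s : Finset V) : ∃ t : Finset (V →ₗ[ℝ] ℝ), gcone s = hcone t := by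
  classical
  induction s using Finset.induction_on with
  | empty =>
    let b := Module.finBasis ℝ V
    refine ⟨Finset.univ.image (fun i => b.coord i) ∪ Finset.univ.image (fun i => - b.coord i), ?_⟩
    ext x
    constructor
    · rintro ⟨c, -, rfl⟩
      intro f _
      simp
    · intro h
      refine ⟨0, by simp, ?_⟩
      rw [Finset.sum_empty]
      apply b.ext_elem
      intro i
      have h1 := h (b.coord i) (by simp)
      have h2 := h (- b.coord i) (by simp)
      simp only [LinearMap.neg_apply, Module.Basis.coord_apply] at h1 h2
      simp only [map_zero, Finsupp.coe_zero, Pi.zero_apply]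
      linarith
  | insert v s hv ih =>
    obtain ⟨t, ht⟩ := ih
    refine ⟨t.filter (fun f => 0 ≤ f v) ∪
      ((t.filter (fun f => 0 < f v)) ×ˢ (t.filter (fun f => f v < 0))).image
        (fun p => p.1 v • p.2 - p.2 v • p.1), ?_⟩
    ext x
    rw [gcone_insert s v hv, ht]
    constructor
    · rintro ⟨a, ha, h⟩ f hf
      have key : ∀ g ∈ t, a * g v ≤ g x := fun g hg => by
        have := h g hg
        simp only [map_sub, map_smul, smul_eq_mul] at this
        linarith
      rw [Finset.mem_union] at hf
      rcases hf with hf | hf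
      · rw [Finset.mem_filter] at hf
        exact (mul_nonneg ha hf.2).trans (key f hf.1)
      · rw [Finset.mem_image] at hf
        obtain ⟨⟨p, q⟩, hpq, rfl⟩ := hf
        simp only [Finset.mem_product, Finset.mem_filter] at hpq
        obtain ⟨⟨hp, hp'⟩, hq, hq'⟩ := hpq
        simp only [LinearMap.sub_apply, LinearMap.smul_apply, smul_eq_mul]
        nlinarith [key p hp, key q hq]
    · intro h
      have h1 : ∀ f ∈ t, 0 ≤ f v → 0 ≤ f x := fun f hf hfv =>
        h f (by simp [hf, hfv])
      have h2 : ∀ p ∈ t, ∀ q ∈ t, 0 < p v → q v < 0 → 0 ≤ p v * q x - q v * p x := by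
        intro p hp q hq hpv hqv
        have := h (p v • q - q v • p) (by
          rw [Finset.mem_union, Finset.mem_image]
          right
          exact ⟨(p, q), by simp [hp, hq, hpv, hqv], rfl⟩)
        simpa using this
      let N : Finset ℝ := insert 0 ((t.filter (fun f => f v < 0)).image (fun f => f x / f v))
      have hN : N.Nonempty := ⟨0, by simp [N]⟩
      refine ⟨N.max' hN, N.le_max' 0 (by simp [N]), ?_⟩
      intro f hf
      simp only [map_sub, map_smul, smul_eq_mul]
      have hm := N.max'_mem hN
      rcases lt_trichotomy (f v) 0 with hfv | hfv | hfv
      · have : f x / f v ≤ N.max' hN := N.le_max' _ (by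
          simp only [N, Finset.mem_insert, Finset.mem_image, Finset.mem_filter]
          right
          exact ⟨f, ⟨hf, hfv⟩, rfl⟩)
        rw [div_le_iff_of_neg hfv] at this
        linarith
      · rw [hfv]; simpa using h1 f hf hfv.ge
      · generalize N.max' hN = a at hm
        simp only [N, Finset.mem_insert, Finset.mem_image, Finset.mem_filter] at hm
        rcases hm with rfl | ⟨q, ⟨hq, hqv⟩, rfl⟩
        · simpa using h1 f hf hfv.le
        · have := h2 f hf q hq hfv hqv
          have e : f x - q x / q v * f v = (f v * q x - q v * f x) / (- q v) := by
            field_simp [hqv.ne]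
            ring
          rw [e]
          exact div_nonneg this (by linarith)

/-- the dual cone of an H-cone -/
theorem exists_dual {V : Type*} [AddCommGroup V] [Module ℝ V] [FiniteDimensional ℝ V]
    (t : Finset (V →ₗ[ℝ] ℝ)) : ∃ s : Finset V, ∀ f : V →ₗ[ℝ] ℝ,
      f ∈ gcone t ↔ ∀ x ∈ s, 0 ≤ f x := by
  classical
  obtain ⟨u, hu⟩ := exists_hcone (V := Module.Dual ℝ V) t
  refine ⟨u.image (Module.evalEquiv ℝ V).symm, fun f => ?_⟩
  have : f ∈ gcone t ↔ f ∈ hcone (V := Module.Dual ℝ V) u := by rw [← hu]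
  rw [this]
  simp only [hcone, Set.mem_setOf_eq, Finset.mem_image, forall_exists_index, and_imp,
    forall_apply_eq_imp_iff₂]
  refine forall₂_congr fun F _ => ?_
  rw [Module.apply_evalEquiv_symm_apply]

theorem exists_gcone {V : Type*} [AddCommGroup V] [Module ℝ V] [FiniteDimensional ℝ V]
    (t : Finset (V →ₗ[ℝ] ℝ)) : ∃ s : Finset V, hcone t = gcone s := by
  obtain ⟨s, hs⟩ := exists_dual t
  refine ⟨s, ?_⟩
  obtain ⟨g, hg⟩ := exists_hcone s
  ext x
  constructor
  · intro hx
    rw [hg]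
    intro k hk
    obtain ⟨c, hc, rfl⟩ := (hs k).2 fun y hy => by
      have := gen_mem_gcone s y hy
      rw [hg] at this
      exact this k hk
    rw [LinearMap.sum_apply]
    exact Finset.sum_nonneg fun f hf => mul_nonneg (hc f hf) (hx f hf)
  · intro hx f hf
    exact gcone_nonneg s f ((hs f).1 (gen_mem_gcone t f hf)) x hx

/-- The intersection of two polyhedral cones in a finite-dimensional real vector space
is a polyhedral cone, and every face of the intersection is the intersection of a face
of the first cone with a face of the second. -/
theorem stmt13 {V : Type*} [AddCommGroup V] [Module ℝ V] [FiniteDimensional ℝ V]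
    {σ σ' : Set V} (hσ : IsPolyhedralCone σ) (hσ' : IsPolyhedralCone σ') :
    IsPolyhedralCone (σ ∩ σ') ∧
      ∀ τ : Set V, IsFaceOf τ (σ ∩ σ') →
        ∃ τ₁ τ₂ : Set V, IsFaceOf τ₁ σ ∧ IsFaceOf τ₂ σ' ∧ τ = τ₁ ∩ τ₂ := by
  classical
  obtain ⟨s, hs⟩ := hσ
  obtain ⟨s', hs'⟩ := hσ'
  obtain ⟨t, ht⟩ := exists_hcone s
  obtain ⟨t', ht'⟩ := exists_hcone s'
  replace ht : σ = hcone t := hs.trans ht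
  replace ht' : σ' = hcone t' := hs'.trans ht'
  have hi : σ ∩ σ' = hcone (t ∪ t') := by
    rw [ht, ht']
    ext x
    simp only [hcone, Set.mem_inter_iff, Set.mem_setOf_eq, Finset.mem_union]
    exact ⟨fun h f hf => hf.elim (h.1 f) (h.2 f),
      fun h => ⟨fun f hf => h f (Or.inl hf), fun f hf => h f (Or.inr hf)⟩⟩
  constructor
  · obtain ⟨r, hr⟩ := exists_gcone (t ∪ t')
    exact ⟨r, hi.trans hr⟩
  · rintro τ ⟨ℓ, hℓ, rfl⟩
    obtain ⟨r, hr⟩ := exists_dual (t ∪ t')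
    have hrm : ∀ x ∈ r, x ∈ σ ∩ σ' := by
      intro x hx
      rw [hi]
      intro f hf
      exact (hr f).1 (gen_mem_gcone _ f hf) x hx
    obtain ⟨c, hc, hl⟩ := (hr ℓ).2 fun x hx => hℓ x (hrm x hx)
    have hm : ∀ x ∈ σ, 0 ≤ (∑ f ∈ t, c f • f) x := by
      intro x hx
      rw [ht] at hx
      rw [LinearMap.sum_apply]
      exact Finset.sum_nonneg fun f hf => mul_nonneg (hc f (by simp [hf])) (hx f hf)
    have hm' : ∀ x ∈ σ', 0 ≤ (∑ f ∈ t' \ t, c f • f) x := by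
      intro x hx
      rw [ht'] at hx
      rw [LinearMap.sum_apply]
      refine Finset.sum_nonneg fun f hf => ?_
      have hf' := (Finset.mem_sdiff.1 hf).1
      exact mul_nonneg (hc f (by simp [hf'])) (hx f hf')
    have hsum : ℓ = (∑ f ∈ t, c f • f) + (∑ f ∈ t' \ t, c f • f) := by
      rw [hl, ← Finset.union_sdiff_self_eq_union, Finset.sum_union Finset.disjoint_sdiff]
    refine ⟨_, _, ⟨_, hm, rfl⟩, ⟨_, hm', rfl⟩, ?_⟩
    generalize (∑ f ∈ t, c f • f) = m at *
    generalize (∑ f ∈ t' \ t, c f • f) = m' at *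
    ext x
    simp only [Set.mem_inter_iff, Set.mem_setOf_eq]
    constructor
    · rintro ⟨⟨h1, h2⟩, h3⟩
      have a1 := hm x h1
      have a2 := hm' x h2
      rw [hsum, LinearMap.add_apply] at h3
      exact ⟨⟨h1, by linarith⟩, h2, by linarith⟩
    · rintro ⟨⟨h1, h2⟩, h3, h4⟩
      exact ⟨⟨h1, h3⟩, by rw [hsum, LinearMap.add_apply, h2, h4, add_zero]⟩
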